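/- arXiv:2205.15197 — 3 statements merged into one kernel-verified Lean document; each statement's English description precedes it below -/
import Mathlib

section
/- For every r ≥ 3 there exists m₀ such that for all m ≥ m₀, at least one of the pairs (m, ⌊C(m,r)/2⌋) and (m, ⌊C(m,r)/2⌋ − m − 1) is absolutely r-avoidable. -/
open Finset
open scoped Classical

/-- `(n,e) →_r (m,f)`: every `r`-uniform hypergraph on `n` vertices with `e` edges
has an induced sub-hypergraph on `m` vertices with exactly `f` edges. -/
def PairArrows (r n e m f : ℕ) : Prop :=
  ∀ G : Finset (Finset (Fin n)), (∀ s ∈ G, s.card = r) → G.card = e →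
    ∃ S : Finset (Fin n), S.card = m ∧ (G.filter (fun t => t ⊆ S)).card = f

/-- The density `σ_r(m,f)`. -/
noncomputable def sigmaR (r m f : ℕ) : ℝ :=
  Filter.limsup
    (fun n : ℕ =>
      (((Finset.range (n.choose r + 1)).filter (fun e => PairArrows r n e m f)).card : ℝ) /
        (n.choose r : ℝ))
    Filter.atTop
/-- The pair `(m,f)` is absolutely `r`-avoidable. -/
def AbsolutelyAvoidable (r m f : ℕ) : Prop :=
  ∃ n₀ : ℕ, ∀ n > n₀, ∀ e ≤ n.choose r,
    ∃ G : Finset (Finset (Fin n)), (∀ s ∈ G, s.card = r) ∧ G.card = e ∧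
      ¬ ∃ S : Finset (Fin n), S.card = m ∧ (G.filter (fun t => t ⊆ S)).card = f


/-- few functions are constant on a given set -/
lemma card_mono_le {α : Type*} [Fintype α] (q m : ℕ) (A : Finset α)
    (hA : A.card = m + 1) :
    (univ.filter (fun f : α → Fin q => ∀ a ∈ A, ∀ b ∈ A, f a = f b)).card * q ^ m
      ≤ q ^ Fintype.card α := by
  obtain ⟨a0, ha0⟩ : A.Nonempty := by rw [← card_pos]; omega
  set B : Finset α := (A.erase a0)ᶜ with hB
  have hBc : B.card + m = Fintype.card α := by
    have h1 : (A.erase a0).card = m := by rw [card_erase_of_mem ha0]; omega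
    have h2 := card_add_card_compl (A.erase a0)
    rw [← hB] at h2
    omega
  have h : (univ.filter (fun f : α → Fin q => ∀ a ∈ A, ∀ b ∈ A, f a = f b)).card
      ≤ (univ : Finset (B → Fin q)).card := by
    apply card_le_card_of_injOn (fun f (b : B) => f b)
    · intro f _; simp
    · intro f hf g hg hfg
      have hf' : ∀ a ∈ A, ∀ b ∈ A, f a = f b := by simpa using hf
      have hg' : ∀ a ∈ A, ∀ b ∈ A, g a = g b := by simpa using hg
      have key : ∀ b ∈ B, f b = g b := fun b hb => congrFun hfg ⟨b, hb⟩
      funext x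
      by_cases hx : x ∈ B
      · exact key x hx
      · have hxA : x ∈ A := by
          rw [hB, mem_compl, not_not] at hx
          exact mem_of_mem_erase hx
        rw [hf' x hxA a0 ha0, hg' x hxA a0 ha0]
        exact key a0 (by simp [hB])
  have h3 : (univ : Finset (B → Fin q)).card = q ^ B.card := by simp
  rw [h3] at h
  calc _ ≤ q ^ B.card * q ^ m := Nat.mul_le_mul_right _ h
    _ = _ := by rw [← pow_add, hBc]

lemma exists_coloring {α : Type*} [Fintype α] (q m : ℕ) (hq : 1 ≤ q)
    (B : Finset (Finset α)) (hB : ∀ A ∈ B, A.card = m + 1) :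
    ∃ f : α → Fin q,
      (B.filter (fun A => ∀ a ∈ A, ∀ b ∈ A, f a = f b)).card * q ^ m ≤ B.card := by
  by_contra! hcon
  have h1 : ∑ f : α → Fin q, B.card <
      ∑ f : α → Fin q, (B.filter (fun A => ∀ a ∈ A, ∀ b ∈ A, f a = f b)).card * q ^ m := by
    apply sum_lt_sum_of_nonempty
    · exact ⟨fun _ => ⟨0, hq⟩, mem_univ _⟩
    · intro f _; exact hcon f
  have h2 : ∑ f : α → Fin q, (B.filter (fun A => ∀ a ∈ A, ∀ b ∈ A, f a = f b)).card * q ^ m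
      = ∑ A ∈ B, (univ.filter (fun f : α → Fin q => ∀ a ∈ A, ∀ b ∈ A, f a = f b)).card * q ^ m := by
    rw [← sum_mul, ← sum_mul]
    congr 1
    simp only [card_filter]
    rw [sum_comm]
  have h3 : ∑ A ∈ B, (univ.filter (fun f : α → Fin q => ∀ a ∈ A, ∀ b ∈ A, f a = f b)).card * q ^ m
      ≤ ∑ A ∈ B, q ^ Fintype.card α :=
    sum_le_sum (fun A hA => card_mono_le q m A (hB A hA))
  rw [h2] at h1
  have h4 := lt_of_lt_of_le h1 h3
  simp [mul_comm] at h4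

lemma exists_indep {α : Type*} [Fintype α] (q m : ℕ) (hq : 1 ≤ q)
    (B : Finset (Finset α)) (hB : ∀ A ∈ B, A.card = m + 1) (X : Finset α)
    (hX : 2 * B.card ≤ X.card * q ^ m) :
    ∃ I ⊆ X, X.card ≤ 2 * q * I.card ∧ ∀ A ∈ B, ¬ A ⊆ I := by
  obtain ⟨f, hf⟩ := exists_coloring q m hq B hB
  set M := B.filter (fun A => ∀ a ∈ A, ∀ b ∈ A, f a = f b) with hM
  have hne : ∀ A ∈ B, ∃ a, a ∈ A := by
    intro A hA
    have := hB A hA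
    exact card_pos.mp (by omega)
  choose g hg using hne
  have hMB : ∀ A ∈ M, A ∈ B := fun A hA => (mem_filter.mp hA).1
  set D := M.attach.image (fun A => g A.1 (hMB A.1 A.2)) with hD
  have hDM : D.card ≤ M.card := card_image_le.trans_eq card_attach
  have h2 : 2 * M.card ≤ X.card := by
    have hp : 0 < q ^ m := Nat.pow_pos hq
    refine Nat.le_of_mul_le_mul_right (c := q ^ m) ?_ hp
    calc 2 * M.card * q ^ m = 2 * (M.card * q ^ m) := by ring
      _ ≤ 2 * B.card := Nat.mul_le_mul_left _ hf
      _ ≤ _ := hX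
  have hXD : X.card ≤ 2 * (X \ D).card := by
    have := le_card_sdiff D X
    omega
  obtain ⟨c, hc⟩ : ∃ c : Fin q, (X \ D).card ≤ q * ((X \ D).filter (fun a => f a = c)).card := by
    by_contra! hcon
    have e1 : (X \ D).card = ∑ c : Fin q, ((X \ D).filter (fun a => f a = c)).card :=
      card_eq_sum_card_fiberwise (fun a _ => by simp)
    have e2 : ∑ c : Fin q, q * ((X \ D).filter (fun a => f a = c)).card
        < ∑ c : Fin q, (X \ D).card :=
      sum_lt_sum_of_nonempty ⟨⟨0, hq⟩, mem_univ _⟩ (fun c _ => hcon c)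
    rw [← mul_sum, ← e1] at e2
    simp at e2
  refine ⟨(X \ D).filter (fun a => f a = c), ?_, ?_, ?_⟩
  · exact (filter_subset _ _).trans sdiff_subset
  · nlinarith
  · intro A hA hAI
    have hAM : A ∈ M := by
      rw [hM, mem_filter]
      refine ⟨hA, fun a ha b hb => ?_⟩
      rw [(mem_filter.mp (hAI ha)).2, (mem_filter.mp (hAI hb)).2]
    have h5 := (mem_filter.mp (hAI (hg A hA))).1
    exact (mem_sdiff.mp h5).2 (mem_image.mpr ⟨⟨A, hAM⟩, mem_attach _ _, rfl⟩)

lemma choose_sub_bound (r n v : ℕ) (hv : v ≤ n) :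
    n.choose (r + 1) ≤ (n - v).choose (r + 1) + v * (n - 1).choose r := by
  induction v with
  | zero => simp
  | succ v ih =>
    have h1 := ih (by omega)
    obtain ⟨w, hw⟩ : ∃ w, n - v = w + 1 := ⟨n - v - 1, by omega⟩
    have hw' : n - (v + 1) = w := by omega
    rw [hw, Nat.choose_succ_succ'] at h1
    have h2 : w.choose r ≤ (n - 1).choose r := Nat.choose_le_choose r (by omega)
    rw [hw', add_mul, one_mul]
    omega

/-- pow lower bound -/
lemma pow_bound (r v : ℕ) (hv : 2 * r ≤ v) : v ^ r ≤ 2 ^ r * (r.factorial * v.choose r) := by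
  have h1 : ((v + 1 - r : ℕ) ^ r : ℕ) ≤ r.factorial * v.choose r := by
    rw [← Nat.descFactorial_eq_factorial_mul_choose]
    exact Nat.pow_sub_le_descFactorial v r
  calc v ^ r ≤ (2 * (v + 1 - r)) ^ r := Nat.pow_le_pow_left (by omega) r
    _ = 2 ^ r * (v + 1 - r) ^ r := by rw [mul_pow]
    _ ≤ _ := Nat.mul_le_mul_left _ h1

lemma clique_sparse_exists (r m : ℕ) (hr : 1 ≤ r) :
    ∃ n₀ : ℕ, ∀ n > n₀, ∀ e, 2 * e ≤ n.choose r →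
      ∃ G : Finset (Finset (Fin n)), (∀ s ∈ G, s.card = r) ∧ G.card = e ∧
        ∀ S : Finset (Fin n), S.card = m → ∃ x ≤ m, x.choose r ≤ (G.filter (fun t => t ⊆ S)).card
          ∧ (G.filter (fun t => t ⊆ S)).card ≤ x.choose r + m := by
  set A : ℕ := (4 * r) ^ r * r.factorial with hA
  set D : ℕ := ((m.choose r).choose (m + 1)) with hD
  have hApos : 0 < A := by positivity
  refine ⟨2 * D * A * (4 * A) ^ m + 2 * A + 4 * r * r, fun n hn e he => ?_⟩
  -- the clique size
  set k := Nat.findGreatest (fun k => k.choose r ≤ e) n with hk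
  have hkn : k ≤ n := Nat.findGreatest_le n
  have hke : k.choose r ≤ e :=
    Nat.findGreatest_spec (P := fun k => k.choose r ≤ e) (m := 0) (Nat.zero_le _)
      (by rw [Nat.choose_eq_zero_of_lt hr]; exact Nat.zero_le _)
  have hrr : 4 * r * r ≤ n := by
    have : 0 ≤ 2 * D * A * (4 * A) ^ m := Nat.zero_le _
    omega
  have hrn : r ≤ n := by nlinarith
  have hnpos : 0 < n.choose r := Nat.choose_pos hrn
  have hkn' : k < n := by
    rcases hkn.lt_or_eq with h | h
    · exact h
    · rw [h] at hke; omega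
  have hke' : e < (k + 1).choose r := by
    by_contra! h
    have := Nat.le_findGreatest (P := fun k => k.choose r ≤ e) (show k + 1 ≤ n by omega) h
    omega
  obtain ⟨s, rfl⟩ : ∃ s, r = s + 1 := ⟨r - 1, by omega⟩
  have hes : e - k.choose (s + 1) ≤ k.choose s := by
    rw [Nat.choose_succ_succ'] at hke'
    omega
  -- v is large
  set v := n - k with hv
  have hnv : n ≤ 2 * (s + 1) * v := by
    have h1 := choose_sub_bound s n v (by omega)
    have h2 : n - v = k := by omega
    rw [h2] at h1
    have h3 : n * (n - 1).choose s = n.choose (s + 1) * (s + 1) := by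
      obtain ⟨n', rfl⟩ : ∃ n', n = n' + 1 := ⟨n - 1, by omega⟩
      simpa using Nat.add_one_mul_choose_eq n' s
    have h4 : n.choose (s + 1) ≤ 2 * (v * (n - 1).choose s) := by omega
    have h5 : 0 < (n - 1).choose s := Nat.choose_pos (by omega)
    refine Nat.le_of_mul_le_mul_right (c := (n - 1).choose s) ?_ h5
    rw [h3]
    nlinarith
  have hv2 : 2 * (s + 1) ≤ v := by
    have : 2 * (s + 1) * (2 * (s + 1)) ≤ 2 * (s + 1) * v := by nlinarith
    exact Nat.le_of_mul_le_mul_left this (by omega)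
  set N := v.choose (s + 1) with hN
  have hnA : n ^ (s + 1) ≤ A * N := by
    calc n ^ (s + 1) ≤ (2 * (s + 1) * v) ^ (s + 1) := Nat.pow_le_pow_left hnv _
      _ = (2 * (s + 1)) ^ (s + 1) * v ^ (s + 1) := by rw [mul_pow]
      _ ≤ (2 * (s + 1)) ^ (s + 1) * (2 ^ (s + 1) * ((s + 1).factorial * v.choose (s + 1))) :=
          Nat.mul_le_mul_left _ (pow_bound _ _ hv2)
      _ = A * N := by
          rw [hA, hN, show 4 * (s + 1) = 2 * (s + 1) * 2 by ring, mul_pow (2 * (s + 1)) 2]; ring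
  set q := n / (2 * A) with hq
  have hn2A : 2 * A ≤ n := by
    have : 0 ≤ 2 * D * A * (4 * A) ^ m := Nat.zero_le _
    nlinarith
  have hq1 : 1 ≤ q := (Nat.one_le_div_iff (by omega)).2 hn2A
  have hqle : 2 * A * q ≤ n := Nat.mul_div_le n (2 * A)
  have hqge : n ≤ 4 * A * q := by
    have h1 : n < 2 * A * (q + 1) := Nat.lt_mul_div_succ n (by omega)
    nlinarith
  -- vertex sets
  obtain ⟨K, -, hK⟩ := exists_subset_card_eq (s := (univ : Finset (Fin n))) (n := k) (by simpa using hkn)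
  have hKc : Kᶜ.card = v := by rw [card_compl, hK]; simp [hv]
  set X := powersetCard (s + 1) Kᶜ with hX
  have hXc : X.card = N := by rw [hX, card_powersetCard, hKc]
  set B : Finset (Finset (Finset (Fin n))) :=
    (powersetCard m (univ : Finset (Fin n))).biUnion
      (fun S => powersetCard (m + 1) (powersetCard (s + 1) S)) with hB
  have hBc : B.card ≤ n ^ m * D := by
    calc B.card ≤ (powersetCard m (univ : Finset (Fin n))).card * D := by
          apply card_biUnion_le_card_mul
          intro S hS
          rw [card_powersetCard, card_powersetCard, (mem_powersetCard.mp hS).2]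
      _ ≤ n ^ m * D := by
          apply Nat.mul_le_mul_right
          rw [card_powersetCard, card_univ, Fintype.card_fin]
          exact Nat.choose_le_pow n m
  have hBm : ∀ T ∈ B, T.card = m + 1 := by
    intro T hT
    obtain ⟨S, -, hS⟩ := mem_biUnion.mp hT
    exact (mem_powersetCard.mp hS).2
  have hNbig : 2 * D * (4 * A) ^ m ≤ N := by
    refine le_of_mul_le_mul_left (a := A) ?_ hApos
    calc A * (2 * D * (4 * A) ^ m) = 2 * D * A * (4 * A) ^ m := by ring
      _ ≤ n := by
        have : 0 ≤ 4 * (s + 1) * (s + 1) := Nat.zero_le _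
        omega
      _ ≤ n ^ (s + 1) := Nat.le_self_pow (by omega) n
      _ ≤ A * N := hnA
  obtain ⟨I, hIX, hIc, hIB⟩ := exists_indep q m hq1 B hBm X (by
    rw [hXc]
    calc 2 * B.card ≤ 2 * (n ^ m * D) := Nat.mul_le_mul_left _ hBc
      _ ≤ 2 * ((4 * A * q) ^ m * D) := by gcongr
      _ = (2 * D * (4 * A) ^ m) * q ^ m := by rw [mul_pow (4 * A) q]; ring
      _ ≤ N * q ^ m := Nat.mul_le_mul_right _ hNbig)
  have hIbig : e - k.choose (s + 1) ≤ I.card := by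
    have h1 : n ^ s ≤ I.card := by
      rw [hXc] at hIc
      have h2 : 2 * A * q * n ^ s ≤ 2 * A * q * I.card := by
        calc 2 * A * q * n ^ s ≤ n * n ^ s := Nat.mul_le_mul_right _ hqle
          _ = n ^ (s + 1) := by ring
          _ ≤ A * N := hnA
          _ ≤ A * (2 * q * I.card) := Nat.mul_le_mul_left _ hIc
          _ = _ := by ring
      exact Nat.le_of_mul_le_mul_left h2 (by positivity)
    calc _ ≤ k.choose s := hes
      _ ≤ n.choose s := Nat.choose_le_choose s hkn
      _ ≤ n ^ s := Nat.choose_le_pow n s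
      _ ≤ _ := h1
  obtain ⟨J, hJI, hJc⟩ := exists_subset_card_eq hIbig
  have hdisj : Disjoint (powersetCard (s + 1) K) J := by
    rw [disjoint_left]
    intro t ht htJ
    have h1 := mem_powersetCard.mp ht
    have h2 := mem_powersetCard.mp (hIX (hJI htJ))
    have h3 : t.Nonempty := card_pos.mp (by omega)
    obtain ⟨a, ha⟩ := h3
    exact (mem_compl.mp (h2.1 ha)) (h1.1 ha)
  refine ⟨powersetCard (s + 1) K ∪ J, ?_, ?_, ?_⟩
  · intro t ht
    rcases mem_union.mp ht with h | h
    · exact (mem_powersetCard.mp h).2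
    · exact (mem_powersetCard.mp (hIX (hJI h))).2
  · rw [card_union_of_disjoint hdisj, hJc, card_powersetCard, hK]
    omega
  · intro S hS
    refine ⟨(S ∩ K).card, hS ▸ card_le_card inter_subset_left, ?_⟩
    have h1 : ((powersetCard (s + 1) K ∪ J).filter (fun t => t ⊆ S)).card
        = (S ∩ K).card.choose (s + 1) + (J.filter (fun t => t ⊆ S)).card := by
      rw [filter_union, card_union_of_disjoint
        (disjoint_of_subset_left (filter_subset _ _)
          (disjoint_of_subset_right (filter_subset _ _) hdisj)), ← card_powersetCard]
      congr 2
      ext t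
      simp only [mem_filter, mem_powersetCard, subset_inter_iff]
      tauto
    have h2 : (J.filter (fun t => t ⊆ S)).card ≤ m := by
      by_contra! h
      obtain ⟨T, hT, hTc⟩ := exists_subset_card_eq (show m + 1 ≤ _ from h)
      refine hIB T ?_ (hT.trans ((filter_subset _ _).trans hJI))
      rw [hB, mem_biUnion]
      refine ⟨S, mem_powersetCard.mpr ⟨subset_univ _, hS⟩, mem_powersetCard.mpr ⟨?_, hTc⟩⟩
      intro t ht
      have h3 := mem_filter.mp (hT ht)
      exact mem_powersetCard.mpr ⟨h3.2, (mem_powersetCard.mp (hIX (hJI h3.1))).2⟩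
    rw [h1]
    omega

lemma avoidable_of (r m f : ℕ) (hr : 1 ≤ r)
    (h1 : ∀ x ≤ m, ¬ (x.choose r ≤ f ∧ f ≤ x.choose r + m))
    (h2 : ∀ x ≤ m, ¬ (x.choose r + f ≤ m.choose r ∧ m.choose r ≤ x.choose r + m + f)) :
    AbsolutelyAvoidable r m f := by
  obtain ⟨n₀, hn₀⟩ := clique_sparse_exists r m hr
  refine ⟨n₀, fun n hn e he => ?_⟩
  by_cases hc : 2 * e ≤ n.choose r
  · obtain ⟨G, hG, hGe, hS⟩ := hn₀ n hn e hc
    refine ⟨G, hG, hGe, ?_⟩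
    rintro ⟨S, hSm, hSf⟩
    obtain ⟨x, hx, h3, h4⟩ := hS S hSm
    rw [hSf] at h3 h4
    exact h1 x hx ⟨h3, h4⟩
  · obtain ⟨G, hG, hGe, hS⟩ := hn₀ n hn (n.choose r - e) (by omega)
    have hsub : G ⊆ powersetCard r univ := fun t ht =>
      mem_powersetCard.mpr ⟨subset_univ _, hG t ht⟩
    refine ⟨powersetCard r univ \ G, ?_, ?_, ?_⟩
    · intro t ht
      exact (mem_powersetCard.mp (mem_sdiff.mp ht).1).2
    · rw [card_sdiff_of_subset hsub, hGe, card_powersetCard, card_univ, Fintype.card_fin]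
      omega
    · rintro ⟨S, hSm, hSf⟩
      obtain ⟨x, hx, h3, h4⟩ := hS S hSm
      have h5 : ((powersetCard r univ \ G).filter (fun t => t ⊆ S)).card
          + (G.filter (fun t => t ⊆ S)).card = m.choose r := by
        rw [← card_union_of_disjoint, ← filter_union, sdiff_union_of_subset hsub, ← hSm,
          ← card_powersetCard]
        · congr 1
          ext t
          simp only [mem_filter, mem_powersetCard, subset_univ, true_and]
          tauto
        · exact disjoint_of_subset_left (filter_subset _ _)
            (disjoint_of_subset_right (filter_subset _ _) sdiff_disjoint)
      rw [hSf] at h5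
      exact h2 x hx ⟨by omega, by omega⟩

/-- gap between consecutive binomials near the middle -/
lemma gap_lemma (r m x x' : ℕ) (hr : 1 ≤ r) (hm : 100 * m ^ 2 ≤ m.choose r) (hm1 : 1 ≤ m)
    (hx : x < x') (hx' : x' ≤ m)
    (h1 : m.choose r ≤ 2 * x.choose r + 4 * m + 4)
    (h2 : x'.choose r ≤ x.choose r + 3 * m + 3) : False := by
  obtain ⟨s, rfl⟩ : ∃ s, r = s + 1 := ⟨r - 1, by omega⟩
  have h3 : (x + 1).choose (s + 1) ≤ x'.choose (s + 1) := Nat.choose_le_choose _ hx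
  rw [Nat.choose_succ_succ'] at h3
  have h4 : x.choose s ≤ 3 * m + 3 := by omega
  have h5 := Nat.choose_succ_right_eq x s
  have h6 : x.choose (s + 1) ≤ (3 * m + 3) * m := by
    calc x.choose (s + 1) ≤ x.choose (s + 1) * (s + 1) := Nat.le_mul_of_pos_right _ (by omega)
      _ = x.choose s * (x - s) := h5
      _ ≤ _ := Nat.mul_le_mul h4 (by omega)
  nlinarith

/-- For every `r ≥ 3` and all sufficiently large `m`, either `(m, ⌊C(m,r)/2⌋)` or
`(m, ⌊C(m,r)/2⌋ - m - 1)` is absolutely `r`-avoidable. -/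
theorem main_absolutely_avoidable (r : ℕ) (hr : 3 ≤ r) :
    ∃ m₀ : ℕ, ∀ m ≥ m₀,
      AbsolutelyAvoidable r m (m.choose r / 2) ∨
      AbsolutelyAvoidable r m (m.choose r / 2 - m - 1) := by
  refine ⟨800 * r.factorial + 2 * r + 1, fun m hm => ?_⟩
  have hfac : 0 < r.factorial := r.factorial_pos
  have hbig : 100 * m ^ 2 ≤ m.choose r := by
    have h1 : ((m + 1 - r : ℕ) ^ r : ℕ) ≤ r.factorial * m.choose r := by
      rw [← Nat.descFactorial_eq_factorial_mul_choose]
      exact Nat.pow_sub_le_descFactorial m r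
    have h2 : (m + 1 - r) ^ 3 ≤ (m + 1 - r) ^ r := Nat.pow_le_pow_right (by omega) hr
    have h3 : m ^ 3 ≤ (2 * (m + 1 - r)) ^ 3 := Nat.pow_le_pow_left (by omega) 3
    have h4 : m ^ 3 ≤ 8 * (r.factorial * m.choose r) := by
      rw [mul_pow] at h3
      omega
    have h5 : 800 * r.factorial * m ^ 2 ≤ m * m ^ 2 := Nat.mul_le_mul_right _ (by omega)
    refine le_of_mul_le_mul_left (a := 8 * r.factorial) ?_ (by omega)
    nlinarith
  have hmm : m ≤ m ^ 2 := Nat.le_self_pow (by omega) m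
  by_contra! hcon
  obtain ⟨hc1, hc2⟩ := hcon
  have e1 : ∃ x ≤ m, (x.choose r ≤ m.choose r / 2 ∧ m.choose r / 2 ≤ x.choose r + m) ∨
      (x.choose r + m.choose r / 2 ≤ m.choose r ∧
        m.choose r ≤ x.choose r + m + m.choose r / 2) := by
    by_contra! h
    exact hc1 (avoidable_of r m _ (by omega) (fun x hx => by have := h x hx; omega)
      (fun x hx => by have := h x hx; omega))
  have e2 : ∃ x ≤ m, (x.choose r ≤ m.choose r / 2 - m - 1 ∧
        m.choose r / 2 - m - 1 ≤ x.choose r + m) ∨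
      (x.choose r + (m.choose r / 2 - m - 1) ≤ m.choose r ∧
        m.choose r ≤ x.choose r + m + (m.choose r / 2 - m - 1)) := by
    by_contra! h
    exact hc2 (avoidable_of r m _ (by omega) (fun x hx => by have := h x hx; omega)
      (fun x hx => by have := h x hx; omega))
  obtain ⟨x, hx, hx1⟩ := e1
  obtain ⟨y, hy, hy1⟩ := e2
  rcases lt_trichotomy x y with h | h | h
  · exact gap_lemma r m x y (by omega) hbig (by omega) h hy (by omega) (by omega)
  · subst h; omega
  · exact gap_lemma r m y x (by omega) hbig (by omega) h hx (by omega) (by omega)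
end

section
/- Let m ≥ r ≥ 3 and 0 ≤ f ≤ C(m,r). If σ_r(m,f) > 0, then there exist x, x̄ ∈ {0,…,m} such that 0 ≤ f − C(x,r) < m and 0 ≤ (C(m,r) − f) − C(x̄,r) < m. -/
open Finset
open scoped Classical

/-- Number of colourings that give colour `z` to every element of `T`. -/
theorem card_col {α : Type*} [Fintype α] (q : ℕ) (z : Fin q) (T : Finset α) :
    ((univ : Finset (α → Fin q)).filter (fun χ => ∀ t ∈ T, χ t = z)).card * q ^ T.card
      = q ^ Fintype.card α := by
  have h1 : (univ : Finset (α → Fin q)).filter (fun χ => ∀ t ∈ T, χ t = z)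
      = Fintype.piFinset (fun a => if a ∈ T then ({z} : Finset (Fin q)) else univ) := by
    ext χ
    simp only [mem_filter, mem_univ, true_and, Fintype.mem_piFinset]
    constructor
    · intro h a
      by_cases ha : a ∈ T
      · simp [ha, h a ha]
      · simp [ha]
    · intro h t ht
      have := h t
      simpa [ht] using this
  rw [h1, Fintype.card_piFinset]
  have h2 : ∀ a : α, (if a ∈ T then ({z} : Finset (Fin q)) else univ).card
      = if a ∈ T then 1 else q := by
    intro a; split_ifs <;> simp
  simp only [h2]
  have h3 : q ^ T.card = ∏ a : α, if a ∈ T then q else 1 := by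
    simp
  rw [h3, ← Finset.prod_mul_distrib]
  have h4 : ∀ a : α, ((if a ∈ T then 1 else q) * if a ∈ T then q else 1) = q := by
    intro a; split_ifs <;> simp
  simp [h4]

/-- Deletion method. -/
theorem deletion {α : Type*} [Fintype α] (q m : ℕ) (hq : 0 < q) (hm : 0 < m) (E : Finset α)
    (B : Finset (Finset α)) (hB : ∀ T ∈ B, T ⊆ E ∧ T.card = m) :
    ∃ F ⊆ E, (∀ T ∈ B, ¬ T ⊆ F) ∧ E.card * q ^ (m - 1) ≤ F.card * q ^ m + B.card := by
  let z : Fin q := ⟨0, hq⟩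
  let X : (α → Fin q) → Finset α := fun χ => E.filter (fun e => χ e = z)
  let Y : (α → Fin q) → Finset (Finset α) := fun χ => B.filter (fun T => ∀ t ∈ T, χ t = z)
  have hX : (∑ χ, (X χ).card) * q = E.card * q ^ Fintype.card α := by
    have : ∑ χ, (X χ).card
        = ∑ e ∈ E, ((univ : Finset (α → Fin q)).filter (fun χ => χ e = z)).card := by
      simp only [X, Finset.card_filter]
      rw [Finset.sum_comm]
    rw [this, Finset.sum_mul, ← smul_eq_mul, ← Finset.sum_const]
    refine Finset.sum_congr rfl fun e _ => ?_
    have := card_col q z ({e} : Finset α)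
    simpa using this
  have hY : (∑ χ, (Y χ).card) * q ^ m = B.card * q ^ Fintype.card α := by
    have : ∑ χ, (Y χ).card
        = ∑ T ∈ B, ((univ : Finset (α → Fin q)).filter (fun χ => ∀ t ∈ T, χ t = z)).card := by
      simp only [Y, Finset.card_filter]
      rw [Finset.sum_comm]
    rw [this, Finset.sum_mul, ← smul_eq_mul, ← Finset.sum_const]
    refine Finset.sum_congr rfl fun T hT => ?_
    have := card_col q z T
    rwa [(hB T hT).2] at this
  have hqm : q ^ m = q * q ^ (m - 1) := by
    rw [← pow_succ', Nat.sub_add_cancel hm]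
  have : Nonempty (α → Fin q) := ⟨fun _ => z⟩
  obtain ⟨χ, -, hχ⟩ := Finset.exists_le_of_sum_le (s := (univ : Finset (α → Fin q)))
    (f := fun χ => (Y χ).card * q ^ m + E.card * q ^ (m - 1))
    (g := fun χ => (X χ).card * q ^ m + B.card) univ_nonempty (by
      apply le_of_eq
      have hX' : (∑ χ, (X χ).card) * q ^ m = E.card * q ^ Fintype.card α * q ^ (m - 1) := by
        rw [hqm, ← mul_assoc, hX]
      simp only [Finset.sum_add_distrib, ← Finset.sum_mul, hY, hX']
      simp
      ring)
  have hne : ∀ T ∈ B, ∃ t, t ∈ T := fun T hT => by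
    have : T.Nonempty := by
      rw [← Finset.card_pos, (hB T hT).2]; exact hm
    exact this
  rcases isEmpty_or_nonempty α with hα | hα
  · refine ⟨E, Finset.Subset.refl _, fun T hT => ?_, ?_⟩
    · exact (hα.false (hne T hT).choose).elim
    · simp [Finset.eq_empty_of_isEmpty E]
  choose! g hg using hne
  refine ⟨X χ \ (Y χ).image g, ?_, ?_, ?_⟩
  · exact Finset.sdiff_subset.trans (Finset.filter_subset _ _)
  · intro T hT hTF
    have h1 : g T ∈ X χ \ (Y χ).image g := hTF (hg T hT)
    rw [Finset.mem_sdiff] at h1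
    apply h1.2
    apply Finset.mem_image_of_mem
    refine Finset.mem_filter.2 ⟨hT, fun t ht => ?_⟩
    exact (Finset.mem_filter.1 (Finset.mem_sdiff.1 (hTF ht)).1).2
  · have h1 : (X χ).card ≤ (X χ \ (Y χ).image g).card + (Y χ).card := by
      have h2 := Finset.le_card_sdiff ((Y χ).image g) (X χ)
      have h3 := Finset.card_image_le (s := Y χ) (f := g)
      omega
    have h2 := Nat.mul_le_mul_right (q ^ m) h1
    rw [add_mul] at h2
    omega

/-- A sparse family outside a given clique. -/
theorem sparse (n r m q : ℕ) (hq : 0 < q) (hm : 0 < m) (E : Finset (Finset (Fin n)))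
    (hE : ∀ s ∈ E, s.card = r) :
    ∃ F ⊆ E, (∀ S : Finset (Fin n), S.card = m → (F.filter (fun t => t ⊆ S)).card < m) ∧
      E.card * q ^ (m - 1) ≤ F.card * q ^ m + n ^ m * (m.choose r).choose m := by
  let B : Finset (Finset (Finset (Fin n))) := (powersetCard m E).filter
    (fun T => ∃ S : Finset (Fin n), S.card = m ∧ ∀ t ∈ T, t ⊆ S)
  obtain ⟨F, hFE, hF, hc⟩ := deletion q m hq hm E B (fun T hT =>
    Finset.mem_powersetCard.1 (Finset.mem_filter.1 hT).1)
  refine ⟨F, hFE, ?_, hc.trans (Nat.add_le_add_left ?_ _)⟩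
  · intro S hS
    by_contra hlt
    push Not at hlt
    obtain ⟨T, hT, hTc⟩ := Finset.exists_subset_card_eq hlt
    have hTF : T ⊆ F := hT.trans (Finset.filter_subset _ _)
    refine hF T ?_ hTF
    refine Finset.mem_filter.2 ⟨Finset.mem_powersetCard.2 ⟨hTF.trans hFE, hTc⟩, S, hS, ?_⟩
    intro t ht
    exact (Finset.mem_filter.1 (hT ht)).2
  · have hsub : B ⊆ (powersetCard m (univ : Finset (Fin n))).biUnion
        (fun S => powersetCard m (powersetCard r S)) := by
      intro T hT
      obtain ⟨h1, S, hS, h2⟩ := Finset.mem_filter.1 hT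
      obtain ⟨h3, h4⟩ := Finset.mem_powersetCard.1 h1
      refine Finset.mem_biUnion.2 ⟨S, Finset.mem_powersetCard.2 ⟨subset_univ _, hS⟩, ?_⟩
      refine Finset.mem_powersetCard.2 ⟨fun t ht => ?_, h4⟩
      exact Finset.mem_powersetCard.2 ⟨h2 t ht, hE t (h3 ht)⟩
    refine (Finset.card_le_card hsub).trans ?_
    refine (Finset.card_biUnion_le_card_mul _ _ ((m.choose r).choose m) ?_).trans ?_
    · intro S hS
      rw [Finset.card_powersetCard, Finset.card_powersetCard, (Finset.mem_powersetCard.1 hS).2]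
    · refine Nat.mul_le_mul_right _ ?_
      rw [Finset.card_powersetCard, Finset.card_univ, Fintype.card_fin]
      exact Nat.choose_le_pow n m

/-- Main estimate: if `f` is not close to a binomial, large gaps avoid arrowing. -/
theorem key (r m f D : ℕ) (hr : 3 ≤ r) (hm : r ≤ m) (hD : 0 < D)
    (hno : ∀ x ≤ m, x.choose r ≤ f → x.choose r + m ≤ f) :
    ∃ N, ∀ n ≥ N, ∀ e ≤ n.choose r, D * (n.choose r - e) ≥ n.choose r →
      ¬ PairArrows r n e m f := by
  set c := (m.choose r).choose m with hc
  set K := 5 * r * D with hK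
  have hrD : r ≤ r * D := Nat.le_mul_of_pos_right _ hD
  refine ⟨5 * (r * D) + K ^ m * c + r, fun n hn e he hgap harr => ?_⟩
  obtain ⟨L, hL⟩ : ∃ L, L = r * D := ⟨_, rfl⟩
  have hKL : K = 5 * L := by rw [hK, hL]; ring
  rw [← hL] at hn hrD
  have hnr : r ≤ n := by omega
  have hL0 : 0 < 2 * L := by omega
  obtain ⟨q, hqdef⟩ : ∃ q, q = (n - r + 1) / (2 * L) := ⟨_, rfl⟩
  have hq1 : 2 * L * q ≤ n - r + 1 := by rw [hqdef]; exact Nat.mul_div_le _ _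
  have hq2 : n - r + 1 < 2 * L * q + 2 * L := by
    rw [hqdef]; have := Nat.lt_mul_div_succ (n - r + 1) hL0
    rw [mul_add, mul_one] at this; exact this
  have hq0 : 0 < q := by
    rw [hqdef]; exact Nat.div_pos (by omega) hL0
  have hnK : n ≤ K * q := by
    have : L ≤ L * q := Nat.le_mul_of_pos_right _ hq0
    have e1 : 2 * L * q = 2 * (L * q) := by ring
    have e2 : K * q = 5 * (L * q) := by rw [hKL]; ring
    omega
  obtain ⟨b, hb⟩ : ∃ b, b = n.choose (r - 1) := ⟨_, rfl⟩
  have hpos : 0 < n.choose r := Nat.choose_pos hnr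
  have hbr : n.choose r * r = b * (n - r + 1) := by
    have := Nat.choose_succ_right_eq n (r - 1)
    rw [Nat.sub_add_cancel (by omega)] at this
    rw [this, hb]; congr 1; omega
  have hbig : K ^ m * c ≤ b := by
    have h1 : n - (r - 1) + 1 ≤ b := by
      rw [hb, ← Nat.choose_symm (by omega : r - 1 ≤ n)]
      have h2 : (n - (r - 1) + 1).choose (n - (r - 1)) ≤ n.choose (n - (r - 1)) :=
        Nat.choose_le_choose _ (by omega)
      rwa [Nat.choose_succ_self_right] at h2
    omega
  have hC : 2 * D * q * b ≤ n.choose r := by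
    have : r * (2 * D * q * b) ≤ r * n.choose r := by
      calc r * (2 * D * q * b) = b * (2 * L * q) := by rw [hL]; ring
        _ ≤ b * (n - r + 1) := Nat.mul_le_mul_left _ hq1
        _ = r * n.choose r := by rw [← hbr]; ring
    exact Nat.le_of_mul_le_mul_left this (by omega)
  have helt : e < n.choose r := by
    by_contra hcon
    have : n.choose r - e = 0 := by omega
    rw [this] at hgap; omega
  -- the clique size
  obtain ⟨k, hk1, hk2, hkn⟩ : ∃ k, k.choose r ≤ e ∧ e < (k + 1).choose r ∧ k < n := by
    have hex : ∃ j : ℕ, e < j.choose r := ⟨n, helt⟩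
    have hs := Nat.find_spec hex
    have hle : Nat.find hex ≤ n := Nat.find_min' hex helt
    rcases hj : Nat.find hex with _ | j
    · rw [hj, Nat.choose_eq_zero_of_lt (by omega : 0 < r)] at hs; omega
    · refine ⟨j, ?_, by rwa [hj] at hs, by omega⟩
      have := Nat.find_min hex (m := j) (by omega)
      omega
  have hext : e - k.choose r ≤ b := by
    have h1 : (k + 1).choose r = k.choose (r - 1) + k.choose r := by
      obtain ⟨r', rfl⟩ : ∃ r', r = r' + 1 := ⟨r - 1, by omega⟩
      rw [Nat.choose_succ_succ]; simp
    have h2 : k.choose (r - 1) ≤ b := hb ▸ Nat.choose_le_choose _ hkn.le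
    omega
  obtain ⟨A, -, hA⟩ := Finset.exists_subset_card_eq
    (s := (univ : Finset (Fin n))) (n := k) (by simp; omega)
  obtain ⟨E, hE⟩ : ∃ E, E = powersetCard r (univ : Finset (Fin n)) \ powersetCard r A := ⟨_, rfl⟩
  have hEc : E.card = n.choose r - k.choose r := by
    rw [hE, Finset.card_sdiff_of_subset (Finset.powersetCard_mono (subset_univ _))]
    simp [hA]
  obtain ⟨F, hFE, hF, hFc⟩ := sparse n r m q hq0 (by omega) E (fun s hs => by
    rw [hE] at hs
    exact (Finset.mem_powersetCard.1 (Finset.mem_sdiff.1 hs).1).2)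
  have hE2 : 2 * q * b ≤ E.card := by
    have : D * (2 * q * b) ≤ D * E.card := by
      calc D * (2 * q * b) = 2 * D * q * b := by ring
        _ ≤ n.choose r := hC
        _ ≤ D * (n.choose r - e) := hgap
        _ ≤ D * E.card := Nat.mul_le_mul_left _ (by omega)
    exact Nat.le_of_mul_le_mul_left this hD
  have hFb : b ≤ F.card := by
    have hqm : q ^ m = q * q ^ (m - 1) := by
      rw [← pow_succ', Nat.sub_add_cancel (by omega)]
    have h1 : (2 * b) * q ^ m ≤ (F.card + K ^ m * c) * q ^ m := by
      calc (2 * b) * q ^ m = 2 * q * b * q ^ (m - 1) := by rw [hqm]; ring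
        _ ≤ E.card * q ^ (m - 1) := Nat.mul_le_mul_right _ hE2
        _ ≤ F.card * q ^ m + n ^ m * c := hFc
        _ ≤ F.card * q ^ m + (K * q) ^ m * c :=
          Nat.add_le_add_left (Nat.mul_le_mul_right _ (Nat.pow_le_pow_left hnK m)) _
        _ = (F.card + K ^ m * c) * q ^ m := by rw [mul_pow]; ring
    have h2 := Nat.le_of_mul_le_mul_right h1 (Nat.pow_pos hq0)
    omega
  obtain ⟨F', hF'F, hF'c⟩ := Finset.exists_subset_card_eq (hext.trans hFb)
  have hdisj : Disjoint (powersetCard r A) F' := by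
    rw [Finset.disjoint_left]
    intro s hs hs'
    have := hFE (hF'F hs')
    rw [hE] at this
    exact (Finset.mem_sdiff.1 this).2 hs
  obtain ⟨S, hS, hSf⟩ := harr (powersetCard r A ∪ F') (by
    intro s hs
    rcases Finset.mem_union.1 hs with h | h
    · exact (Finset.mem_powersetCard.1 h).2
    · have := hFE (hF'F h)
      rw [hE] at this
      exact (Finset.mem_powersetCard.1 (Finset.mem_sdiff.1 this).1).2) (by
    rw [Finset.card_union_of_disjoint hdisj, hF'c, Finset.card_powersetCard, hA]; omega)
  rw [Finset.filter_union, Finset.card_union_of_disjoint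
    (Finset.disjoint_filter_filter hdisj)] at hSf
  have h1 : (powersetCard r A).filter (fun t => t ⊆ S) = powersetCard r (A ∩ S) := by
    ext t
    simp only [Finset.mem_filter, Finset.mem_powersetCard, Finset.subset_inter_iff]
    tauto
  rw [h1, Finset.card_powersetCard] at hSf
  have h2 : (F'.filter (fun t => t ⊆ S)).card < m :=
    (Finset.card_le_card (Finset.filter_subset_filter _ hF'F)).trans_lt (hF S hS)
  have h3 := hno (A ∩ S).card (hS ▸ Finset.card_le_card Finset.inter_subset_right) (by omega)
  omega

/-- Complementation. -/
theorem arrows_compl (r n e m f : ℕ) (he : e ≤ n.choose r) 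
    (h : PairArrows r n e m f) : PairArrows r n (n.choose r - e) m (m.choose r - f) := by
  intro G hG hGc
  have hGs : G ⊆ powersetCard r univ := fun s hs =>
    Finset.mem_powersetCard.2 ⟨subset_univ _, hG s hs⟩
  obtain ⟨S, hS, hSf⟩ := h (powersetCard r univ \ G) (fun s hs =>
    (Finset.mem_powersetCard.1 (Finset.mem_sdiff.1 hs).1).2) (by
      rw [Finset.card_sdiff_of_subset hGs, hGc, Finset.card_powersetCard, Finset.card_univ,
        Fintype.card_fin]
      omega)
  refine ⟨S, hS, ?_⟩
  have h1 : powersetCard r S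
      = (powersetCard r univ \ G).filter (fun t => t ⊆ S) ∪ G.filter (fun t => t ⊆ S) := by
    ext t
    have := hG t
    simp only [Finset.mem_union, Finset.mem_filter, Finset.mem_powersetCard, Finset.mem_sdiff,
      Finset.subset_univ, true_and]
    tauto
  have h2 := congrArg Finset.card h1
  rw [Finset.card_union_of_disjoint (Finset.disjoint_filter_filter Finset.sdiff_disjoint), hSf,
    Finset.card_powersetCard, hS] at h2
  omega

/-- If arrowing pairs are rare then the density vanishes. -/
theorem sigma_le (r m f : ℕ) (hr : 3 ≤ r)
    (h : ∀ D > 0, ∃ N, ∀ n ≥ N,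
      ((Finset.range (n.choose r + 1)).filter (fun e => PairArrows r n e m f)).card
        ≤ n.choose r / D + 1) : sigmaR r m f ≤ 0 := by
  apply le_of_forall_pos_le_add
  intro ε hε
  rw [zero_add]
  obtain ⟨D, hD⟩ := exists_nat_gt (2 / ε)
  have hD0 : (0 : ℝ) < D := lt_trans (by positivity) hD
  obtain ⟨N, hN⟩ := h D (by exact_mod_cast hD0)
  unfold sigmaR
  refine Filter.limsup_le_of_le ?_ ?_
  · exact Filter.isCoboundedUnder_le_of_le _ (x := 0) (fun n => by positivity)
  · filter_upwards [Filter.eventually_ge_atTop (N + D + r)] with n hn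
    have h1 := hN n (by omega)
    have h2 : D ≤ n.choose r := by
      have h3 : n - r + 1 ≤ n.choose r := by
        rw [← Nat.choose_symm (by omega : r ≤ n)]
        have h4 : (n - r + 1).choose (n - r) ≤ n.choose (n - r) :=
          Nat.choose_le_choose _ (by omega)
        rwa [Nat.choose_succ_self_right] at h4
      omega
    have h2' : (D : ℝ) ≤ (n.choose r : ℝ) := by exact_mod_cast h2
    have hC0 : (0 : ℝ) < (n.choose r : ℝ) := hD0.trans_le h2'
    rw [div_le_iff₀ hC0]
    have h5 : (((Finset.range (n.choose r + 1)).filter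
        (fun e => PairArrows r n e m f)).card : ℝ) ≤ ((n.choose r / D + 1 : ℕ) : ℝ) := by
      exact_mod_cast h1
    refine h5.trans ?_
    push_cast
    have h6 : ((n.choose r / D : ℕ) : ℝ) ≤ (n.choose r : ℝ) / D := Nat.cast_div_le
    have h7 : (1 : ℝ) ≤ (n.choose r : ℝ) / D := by rwa [le_div_iff₀ hD0, one_mul]
    have h8 : 2 / (D : ℝ) ≤ ε := by
      rw [div_le_iff₀ hD0]; rw [div_lt_iff₀ hε] at hD; linarith
    calc ((n.choose r / D : ℕ) : ℝ) + 1 ≤ 2 / (D : ℝ) * (n.choose r : ℝ) := by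
          have : 2 / (D : ℝ) * (n.choose r : ℝ) = (n.choose r : ℝ) / D + (n.choose r : ℝ) / D := by
            ring
          linarith
      _ ≤ ε * (n.choose r : ℝ) := by gcongr

theorem exists_binomials_near_of_sigma_pos (r m f : ℕ) (hr : 3 ≤ r) (hm : r ≤ m)
    (hf : f ≤ m.choose r) (h : 0 < sigmaR r m f) :
    ∃ x ≤ m, ∃ xbar ≤ m,
      x.choose r ≤ f ∧ f < x.choose r + m ∧
      xbar.choose r ≤ m.choose r - f ∧ m.choose r - f < xbar.choose r + m := by
  have hx : ∃ x ≤ m, x.choose r ≤ f ∧ f < x.choose r + m := by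
    by_contra hno
    push Not at hno
    refine absurd (sigma_le r m f hr fun D hD => ?_) (not_le.2 h)
    obtain ⟨N, hN⟩ := key r m f D hr hm hD hno
    refine ⟨N, fun n hn => ?_⟩
    rw [← Finset.card_range (n.choose r / D + 1)]
    refine Finset.card_le_card_of_injOn (fun e => n.choose r - e) ?_ ?_
    · intro e he
      obtain ⟨h1, h2⟩ := Finset.mem_filter.1 (Finset.mem_coe.1 he)
      have h1' : e ≤ n.choose r := Nat.lt_succ_iff.1 (Finset.mem_range.1 h1)
      have h3 : D * (n.choose r - e) < n.choose r := by
        by_contra hcon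
        exact hN n hn e h1' (not_lt.1 hcon) h2
      refine Finset.mem_coe.2 (Finset.mem_range.2 (Nat.lt_succ_iff.2 ?_))
      rw [Nat.le_div_iff_mul_le hD, mul_comm]
      exact h3.le
    · intro a ha b hb hab
      have h1 := Finset.mem_range.1 (Finset.mem_filter.1 (Finset.mem_coe.1 ha)).1
      have h2 := Finset.mem_range.1 (Finset.mem_filter.1 (Finset.mem_coe.1 hb)).1
      simp only at hab
      omega
  have hxb : ∃ x ≤ m, x.choose r ≤ m.choose r - f ∧ m.choose r - f < x.choose r + m := by
    by_contra hno
    push Not at hno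
    refine absurd (sigma_le r m f hr fun D hD => ?_) (not_le.2 h)
    obtain ⟨N, hN⟩ := key r m (m.choose r - f) D hr hm hD hno
    refine ⟨N, fun n hn => ?_⟩
    rw [← Finset.card_range (n.choose r / D + 1)]
    refine Finset.card_le_card fun e he => ?_
    obtain ⟨h1, h2⟩ := Finset.mem_filter.1 he
    have h1' : e ≤ n.choose r := Nat.lt_succ_iff.1 (Finset.mem_range.1 h1)
    have h3 : D * e < n.choose r := by
      by_contra hcon
      refine hN n hn (n.choose r - e) (Nat.sub_le _ _) ?_ (arrows_compl r n e m f h1' h2)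
      rw [Nat.sub_sub_self h1']
      exact not_lt.1 hcon
    refine Finset.mem_range.2 (Nat.lt_succ_iff.2 ?_)
    rw [Nat.le_div_iff_mul_le hD, mul_comm]
    exact h3.le
  obtain ⟨x, hx1, hx2, hx3⟩ := hx
  obtain ⟨y, hy1, hy2, hy3⟩ := hxb
  exact ⟨x, hx1, y, hy1, hx2, hx3, hy2, hy3⟩
end

section
/- For integers r, m ≥ 3, the number of values f with 0 ≤ f ≤ C(m,r) for which σ_r(m,f) > 0 is at most m^{r/(r−1)} (up to a constant factor); in particular, all but O(m^{r/(r−1)}) of the C(m,r) pairs (m,f) satisfy σ_r(m,f) = 0. -/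
open Finset
open scoped Classical

lemma pow_le_pow_mul_choose (n k : ℕ) (h : k ≤ n) : n ^ k ≤ k ^ k * n.choose k := by
  induction k generalizing n with
  | zero => simp
  | succ k ih =>
    obtain ⟨n, rfl⟩ : ∃ n', n = n' + 1 := ⟨n - 1, by omega⟩
    have hk : k ≤ n := by omega
    have h1 := ih n hk
    have h2 : (n + 1) ^ k ≤ (k + 1) ^ k * n.choose k := by
      rcases Nat.eq_zero_or_pos k with rfl | hk0
      · simp
      · have h3 : ((n + 1) * k) ^ k ≤ ((k + 1) * n) ^ k := by
          apply Nat.pow_le_pow_left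
          nlinarith
        rw [mul_pow, mul_pow] at h3
        have h4 : (k + 1) ^ k * n ^ k ≤ (k + 1) ^ k * (k ^ k * n.choose k) :=
          Nat.mul_le_mul_left _ h1
        have h5 : 0 < k ^ k := by positivity
        apply Nat.le_of_mul_le_mul_right _ h5
        calc _ ≤ _ := h3
          _ ≤ _ := h4
          _ = _ := by ring
    have h6 := Nat.add_one_mul_choose_eq n k
    calc (n + 1) ^ (k + 1) = (n + 1) ^ k * (n + 1) := by ring
      _ ≤ (k + 1) ^ k * n.choose k * (n + 1) := Nat.mul_le_mul_right _ h2
      _ = (k + 1) ^ k * ((n + 1) * n.choose k) := by ring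
      _ = (k + 1) ^ k * ((n + 1).choose (k + 1) * (k + 1)) := by rw [h6]
      _ = _ := by ring

lemma count_fun {α : Type} [Fintype α] (K : Finset α) (q : ℕ) :
    ((univ : Finset (α → Fin (q + 1))).filter (fun c => ∀ t ∈ K, c t = 0)).card *
      (q + 1) ^ K.card = (q + 1) ^ (Fintype.card α) := by
  have h : ((univ : Finset (α → Fin (q + 1))).filter (fun c => ∀ t ∈ K, c t = 0)) =
      Fintype.piFinset (fun a => if a ∈ K then ({0} : Finset (Fin (q + 1))) else univ) := by
    ext c
    simp only [mem_filter, mem_univ, true_and, Fintype.mem_piFinset]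
    refine forall_congr' fun a => ?_
    by_cases ha : a ∈ K <;> simp [ha]
  rw [h, Fintype.card_piFinset]
  have h2 : ∀ a, (if a ∈ K then ({0} : Finset (Fin (q + 1))) else univ).card =
      if a ∈ K then 1 else (q + 1) := by
    intro a; by_cases ha : a ∈ K <;> simp [ha]
  simp only [h2]
  rw [← Finset.prod_const, ← Finset.prod_filter_mul_prod_filter_not univ (fun a => a ∈ K)]
  rw [← Finset.card_univ, ← Finset.prod_const,
    ← Finset.prod_filter_mul_prod_filter_not univ (fun a => a ∈ K)]
  rw [Finset.prod_congr rfl (g := fun _ => 1) (by intro x hx; simp at hx; simp [hx])]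
  rw [Finset.prod_congr rfl (s₁ := univ.filter (fun a => ¬ a ∈ K)) (g := fun _ => q + 1)
    (by intro x hx; simp at hx; simp [hx])]
  simp [mul_comm]

lemma deletion_s12 {α : Type} [Fintype α] [Nonempty α] (T : Finset α) (B : Finset (Finset α)) (q k D M : ℕ)
    (hk : 0 < k) (hB : ∀ K ∈ B, K.card = k) (hBD : B.card ≤ D * (q + 1) ^ k)
    (hT : (q + 1) * (M + D) ≤ T.card) :
    ∃ H ⊆ T, M ≤ H.card ∧ ∀ K ∈ B, ¬ K ⊆ H := by
  set Hc : (α → Fin (q + 1)) → Finset α := fun c => T.filter (fun t => c t = 0) with hHc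
  set Bc : (α → Fin (q + 1)) → Finset (Finset α) :=
    fun c => B.filter (fun K => ∀ t ∈ K, c t = 0) with hBc
  set A := (q + 1) ^ (Fintype.card α) with hA
  have hA0 : 0 < A := by positivity
  have s1 : (∑ c, (Hc c).card) * (q + 1) = T.card * A := by
    have : ∑ c, (Hc c).card =
        ∑ t ∈ T, ((univ : Finset (α → Fin (q + 1))).filter (fun c => c t = 0)).card := by
      simp only [hHc, Finset.card_filter]
      rw [Finset.sum_comm]
    rw [this, Finset.sum_mul, Finset.sum_const_nat (m := A)]
    intro t _
    have := count_fun ({t} : Finset α) q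
    simpa using this
  have s2 : (∑ c, (Bc c).card) * (q + 1) ^ k = B.card * A := by
    have : ∑ c, (Bc c).card =
        ∑ K ∈ B, ((univ : Finset (α → Fin (q + 1))).filter (fun c => ∀ t ∈ K, c t = 0)).card := by
      simp only [hBc, Finset.card_filter]
      rw [Finset.sum_comm]
    rw [this, Finset.sum_mul, Finset.sum_const_nat (m := A)]
    intro K hK
    have := count_fun K q
    rwa [hB K hK] at this
  have s3 : ∑ c, (Bc c).card ≤ D * A := by
    have h5 : 0 < (q + 1) ^ k := by positivity
    apply Nat.le_of_mul_le_mul_right _ h5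
    rw [s2]
    calc B.card * A ≤ D * (q + 1) ^ k * A := Nat.mul_le_mul_right _ hBD
      _ = _ := by ring
  have s4 : (M + D) * A ≤ ∑ c, (Hc c).card := by
    apply Nat.le_of_mul_le_mul_right _ (Nat.succ_pos q)
    show _ * (q + 1) ≤ _ * (q + 1)
    rw [s1]
    calc _ = (q + 1) * (M + D) * A := by ring
      _ ≤ _ := Nat.mul_le_mul_right _ hT
  have hcardc : (univ : Finset (α → Fin (q + 1))).card = A := by simp [hA]
  obtain ⟨c, hc⟩ : ∃ c, M + (Bc c).card ≤ (Hc c).card := by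
    by_contra hcon
    push Not at hcon
    have : ∑ c, (Hc c).card < ∑ c, (M + (Bc c).card) := by
      apply Finset.sum_lt_sum_of_nonempty
      · exact Finset.univ_nonempty
      · intro c _; exact hcon c
    rw [Finset.sum_add_distrib, Finset.sum_const, hcardc, smul_eq_mul] at this
    nlinarith
  have hne : ∀ K : Finset α, K ∈ B → ∃ t, t ∈ K := by
    intro K hK
    have : 0 < K.card := by rw [hB K hK]; exact hk
    exact Finset.card_pos.mp this
  choose! g hg using hne
  refine ⟨Hc c \ (Bc c).image g, ?_, ?_, ?_⟩
  · exact Finset.sdiff_subset.trans (Finset.filter_subset _ _)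
  · have h1 := Finset.le_card_sdiff ((Bc c).image g) (Hc c)
    have h2 : ((Bc c).image g).card ≤ (Bc c).card := Finset.card_image_le
    omega
  · intro K hK hsub
    have hKc : K ∈ Bc c := by
      simp only [hBc, mem_filter]
      refine ⟨hK, fun t ht => ?_⟩
      have := hsub ht
      simp only [hHc, mem_sdiff, mem_filter] at this
      exact this.1.2
    have := hsub (hg K hK)
    rw [mem_sdiff] at this
    exact this.2 (Finset.mem_image_of_mem g hKc)

lemma sparse_s12 (r m n D : ℕ) (hm : 0 < m) (hD : (m.choose r).choose (2 * m) ≤ D)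
    (T : Finset (Finset (Fin n))) (hTr : ∀ t ∈ T, t.card = r) (M : ℕ)
    (hT : (Nat.sqrt n + 1) * (M + D) ≤ T.card) :
    ∃ H ⊆ T, H.card = M ∧ ∀ S : Finset (Fin n), S.card = m →
      (H.filter (fun t => t ⊆ S)).card < 2 * m := by
  set B := (powersetCard m (univ : Finset (Fin n))).biUnion
    (fun S => powersetCard (2 * m) (powersetCard r S)) with hBdef
  have hB : ∀ K ∈ B, K.card = 2 * m := by
    intro K hK
    simp only [hBdef, mem_biUnion, mem_powersetCard] at hK
    obtain ⟨S, _, _, h⟩ := hK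
    exact h
  have hBD : B.card ≤ D * (Nat.sqrt n + 1) ^ (2 * m) := by
    have h1 : B.card ≤ (powersetCard m (univ : Finset (Fin n))).card * D := by
      apply Finset.card_biUnion_le_card_mul
      intro S hS
      rw [mem_powersetCard] at hS
      rw [card_powersetCard, card_powersetCard, hS.2]
      exact hD
    rw [card_powersetCard, card_univ, Fintype.card_fin] at h1
    have h2 : n.choose m ≤ n ^ m := Nat.choose_le_pow n m
    have h3 : n ≤ (Nat.sqrt n + 1) ^ 2 := (Nat.lt_succ_sqrt' n).le
    have h4 : n ^ m ≤ (Nat.sqrt n + 1) ^ (2 * m) := by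
      rw [pow_mul]; exact Nat.pow_le_pow_left h3 m
    calc _ ≤ _ := h1
      _ ≤ (Nat.sqrt n + 1) ^ (2 * m) * D := Nat.mul_le_mul_right _ (h2.trans h4)
      _ = _ := by ring
  obtain ⟨H, hHT, hHM, hHB⟩ := deletion_s12 T B (Nat.sqrt n) (2 * m) D M (by omega) hB hBD hT
  obtain ⟨H', hH', hcard⟩ := Finset.exists_subset_card_eq hHM
  refine ⟨H', hH'.trans hHT, hcard, fun S hS => ?_⟩
  by_contra hcon
  push Not at hcon
  obtain ⟨K, hK, hKc⟩ := Finset.exists_subset_card_eq hcon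
  refine hHB K ?_ ?_
  · simp only [hBdef, mem_biUnion, mem_powersetCard]
    refine ⟨S, ⟨subset_univ _, hS⟩, ?_, hKc⟩
    intro t ht
    have := hK ht
    rw [mem_filter] at this
    rw [mem_powersetCard]
    exact ⟨this.2, hTr t (hHT (hH' this.1))⟩
  · exact hK.trans ((Finset.filter_subset _ _).trans hH')

lemma filter_clique (r n : ℕ) (A S : Finset (Fin n)) :
    ((powersetCard r A).filter (fun t => t ⊆ S)).card = (A ∩ S).card.choose r := by
  rw [← card_powersetCard]
  congr 1
  ext t
  simp only [mem_filter, mem_powersetCard, subset_inter_iff]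
  tauto

lemma arrows_upper (r m n D e f x : ℕ) (hm : 0 < m) (hD : (m.choose r).choose (2 * m) ≤ D)
    (hx : x ≤ n) (h1 : x.choose r ≤ e)
    (hT : (Nat.sqrt n + 1) * ((e - x.choose r) + D) ≤ n.choose r - x.choose r)
    (harr : PairArrows r n e m f) :
    ∃ a j, a ≤ m ∧ j < 2 * m ∧ f = a.choose r + j := by
  obtain ⟨A, -, hA⟩ := Finset.exists_subset_card_eq
    (s := (univ : Finset (Fin n))) (n := x) (by simpa using hx)
  have hsub : powersetCard r A ⊆ powersetCard r univ := powersetCard_mono (subset_univ _)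
  obtain ⟨H, hHT, hHc, hH⟩ := sparse_s12 r m n D hm hD (powersetCard r univ \ powersetCard r A)
    (fun t ht => (mem_powersetCard.mp (mem_sdiff.mp ht).1).2) (e - x.choose r) (by
      rw [card_sdiff_of_subset hsub]; simpa [hA] using hT)
  have hdisj : Disjoint (powersetCard r A) H :=
    (Finset.disjoint_sdiff).mono_right hHT
  obtain ⟨S, hS, hSf⟩ := harr (powersetCard r A ∪ H) (by
      intro s hs
      rcases mem_union.mp hs with h | h
      · exact (mem_powersetCard.mp h).2
      · exact (mem_powersetCard.mp (mem_sdiff.mp (hHT h)).1).2) (by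
      rw [card_union_of_disjoint hdisj, card_powersetCard, hA, hHc]; omega)
  refine ⟨(A ∩ S).card, (H.filter (fun t => t ⊆ S)).card, ?_, hH S hS, ?_⟩
  · rw [← hS]; exact card_le_card inter_subset_right
  · rw [← hSf, filter_union, card_union_of_disjoint, filter_clique]
    exact disjoint_filter_filter hdisj

lemma arrows_lower (r m n D e f x : ℕ) (hm : 0 < m) (hD : (m.choose r).choose (2 * m) ≤ D)
    (hx : x ≤ n) (h1 : e ≤ x.choose r)
    (hT : (Nat.sqrt n + 1) * ((x.choose r - e) + D) ≤ x.choose r)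
    (harr : PairArrows r n e m f) :
    ∃ a j, a ≤ m ∧ j < 2 * m ∧ f + j = a.choose r := by
  obtain ⟨A, -, hA⟩ := Finset.exists_subset_card_eq
    (s := (univ : Finset (Fin n))) (n := x) (by simpa using hx)
  obtain ⟨H, hHT, hHc, hH⟩ := sparse_s12 r m n D hm hD (powersetCard r A)
    (fun t ht => (mem_powersetCard.mp ht).2) (x.choose r - e) (by
      simpa [hA] using hT)
  obtain ⟨S, hS, hSf⟩ := harr (powersetCard r A \ H) (by
      intro s hs
      exact (mem_powersetCard.mp (mem_sdiff.mp hs).1).2) (by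
      rw [card_sdiff_of_subset hHT, card_powersetCard, hA, hHc]; omega)
  refine ⟨(A ∩ S).card, (H.filter (fun t => t ⊆ S)).card, ?_, hH S hS, ?_⟩
  · rw [← hS]; exact card_le_card inter_subset_right
  · rw [← hSf, ← filter_clique, ← card_union_of_disjoint, ← filter_union,
      sdiff_union_of_subset hHT]
    exact disjoint_filter_filter sdiff_disjoint

/-- The set of `f` which can have positive density. -/
def GoodF (r m f : ℕ) : Prop :=
  (∃ a j, a ≤ m ∧ j < 2 * m ∧ f = a.choose r + j) ∧
  (∃ a j, a ≤ m ∧ j < 2 * m ∧ f + j = a.choose r)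

lemma good_of_arrows (r m n D e f : ℕ) (hr : 1 ≤ r) (hm : 0 < m)
    (hD : (m.choose r).choose (2 * m) ≤ D)
    (hlo : (Nat.sqrt n + 1) * (n ^ (r - 1) + D) ≤ e)
    (hhi : (Nat.sqrt n + 1) * (n ^ (r - 1) + D) + e ≤ n.choose r)
    (he : e < n.choose r)
    (harr : PairArrows r n e m f) : GoodF r m f := by
  obtain ⟨s, rfl⟩ : ∃ s, r = s + 1 := ⟨r - 1, by omega⟩
  simp only [Nat.add_sub_cancel] at hlo hhi
  have hex : ∃ x, e < (x + 1).choose (s + 1) := by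
    refine ⟨n, lt_of_lt_of_le he (Nat.choose_le_choose _ (Nat.le_succ n))⟩
  set x := Nat.find hex with hx
  have hx1 : e < (x + 1).choose (s + 1) := Nat.find_spec hex
  have hx2 : x.choose (s + 1) ≤ e := by
    rcases Nat.eq_zero_or_pos x with h0 | h0
    · rw [h0]; simp
    · have := Nat.find_min hex (m := x - 1) (by omega)
      rw [Nat.sub_add_cancel h0] at this
      omega
  have hxn : x + 1 ≤ n := by
    by_contra hcon
    have : n ≤ x := by omega
    have := Nat.choose_le_choose (s + 1) this
    omega
  have hgap : (x + 1).choose (s + 1) = x.choose s + x.choose (s + 1) := Nat.choose_succ_succ x s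
  have hpow : x.choose s ≤ n ^ s :=
    (Nat.choose_le_pow x s).trans (Nat.pow_le_pow_left (by omega) s)
  constructor
  · refine arrows_upper (s + 1) m n D e f x hm hD (by omega) hx2 ?_ harr
    have : (Nat.sqrt n + 1) * ((e - x.choose (s + 1)) + D) ≤ (Nat.sqrt n + 1) * (n ^ s + D) :=
      Nat.mul_le_mul_left _ (by omega)
    omega
  · refine arrows_lower (s + 1) m n D e f (x + 1) hm hD (by omega) hx1.le ?_ harr
    have : (Nat.sqrt n + 1) * (((x + 1).choose (s + 1) - e) + D) ≤
      (Nat.sqrt n + 1) * (n ^ s + D) :=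
      Nat.mul_le_mul_left _ (by omega)
    omega

lemma eventually_large (r D : ℕ) (hr : 2 ≤ r) (δ : ℝ) (hδ : 0 < δ) :
    ∀ᶠ n : ℕ in Filter.atTop,
      (((Nat.sqrt n + 1) * (n ^ (r - 1) + D) + 1 : ℕ) : ℝ) ≤ δ * (n.choose r : ℝ) := by
  obtain ⟨L, hL⟩ := exists_nat_gt (5 * (r : ℝ) ^ r / δ)
  filter_upwards [Filter.eventually_ge_atTop (L ^ 2 + D + r + 1)] with n hn
  obtain ⟨s, rfl⟩ : ∃ s, r = s + 1 := ⟨r - 1, by omega⟩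
  simp only [Nat.add_sub_cancel]
  set q := Nat.sqrt n with hq
  have hLq : L ≤ q := Nat.le_sqrt'.mpr (by omega)
  have hq1 : 1 ≤ q := Nat.le_sqrt'.mpr (by omega)
  have hqn : q * q ≤ n := Nat.sqrt_le n
  have hnD : D ≤ n ^ s := by
    calc D ≤ n := by omega
      _ ≤ n ^ s := Nat.le_self_pow (by omega) n
  have hpos : 1 ≤ n ^ s := Nat.one_le_pow _ _ (by omega)
  have h1 : (q + 1) * (n ^ s + D) + 1 ≤ 5 * q * n ^ s := by nlinarith
  have h2 := pow_le_pow_mul_choose n (s + 1) (by omega)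
  have h1' : (((q + 1) * (n ^ s + D) + 1 : ℕ) : ℝ) ≤ 5 * q * (n : ℝ) ^ s := by exact_mod_cast h1
  have h2' : (n : ℝ) ^ (s + 1) ≤ ((s + 1 : ℕ) : ℝ) ^ (s + 1) * (n.choose (s + 1) : ℝ) := by
    exact_mod_cast h2
  set R : ℝ := ((s + 1 : ℕ) : ℝ) ^ (s + 1) with hR
  have hR0 : 0 < R := by rw [hR]; positivity
  have hLq' : (L : ℝ) ≤ q := by exact_mod_cast hLq
  have hqn' : (q : ℝ) * q ≤ n := by exact_mod_cast hqn
  rw [div_lt_iff₀ hδ] at hL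
  refine h1'.trans ?_
  have hP : (0 : ℝ) < (n : ℝ) ^ s := by exact_mod_cast hpos
  have hq0 : (0 : ℝ) < q := by exact_mod_cast hq1
  have h5 : 5 * R ≤ q * δ := by nlinarith
  have h6 : R * (5 * q * (n : ℝ) ^ s) ≤ R * (δ * (n.choose (s + 1) : ℝ)) := by
    calc R * (5 * q * (n : ℝ) ^ s) = (5 * R) * (q * (n : ℝ) ^ s) := by ring
      _ ≤ (q * δ) * (q * (n : ℝ) ^ s) := by gcongr
      _ = δ * ((q * q) * (n : ℝ) ^ s) := by ring
      _ ≤ δ * (n * (n : ℝ) ^ s) := by gcongr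
      _ = δ * (n : ℝ) ^ (s + 1) := by ring
      _ ≤ δ * (R * (n.choose (s + 1) : ℝ)) := by gcongr
      _ = _ := by ring
  exact le_of_mul_le_mul_left h6 hR0

lemma good_of_pos (r m f : ℕ) (hr : 2 ≤ r) (hm : 0 < m) (hpos : 0 < sigmaR r m f) :
    GoodF r m f := by
  by_contra hbad
  have key : sigmaR r m f ≤ sigmaR r m f / 2 := by
    set δ := sigmaR r m f / 4 with hδ
    have hδ0 : 0 < δ := by rw [hδ]; linarith
    conv_lhs => unfold sigmaR
    apply Filter.limsup_le_of_le
    · refine Filter.isCoboundedUnder_le_of_le _ (x := 0) (fun n => by positivity)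
    · filter_upwards [eventually_large r ((m.choose r).choose (2 * m)) hr δ hδ0] with n hn
      set Q := (Nat.sqrt n + 1) * (n ^ (r - 1) + (m.choose r).choose (2 * m)) + 1 with hQ
      have hC : (0 : ℝ) < n.choose r := by
        have : (1 : ℝ) ≤ (Q : ℝ) := by exact_mod_cast Nat.succ_le_succ (Nat.zero_le _)
        by_contra hcon
        have : δ * (n.choose r : ℝ) ≤ 0 := mul_nonpos_of_nonneg_of_nonpos hδ0.le (not_lt.mp hcon)
        linarith
      rw [div_le_iff₀ hC]
      have hsub : ((range (n.choose r + 1)).filter (fun e => PairArrows r n e m f)) ⊆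
          range Q ∪ (range Q).image (fun i => n.choose r - i) := by
        intro e he
        rw [mem_filter, mem_range] at he
        by_contra hcon
        rw [mem_union, mem_range, mem_image] at hcon
        push Not at hcon
        obtain ⟨hc1, hc2⟩ := hcon
        have h3 : Q ≤ n.choose r - e := by
          by_contra h
          exact hc2 (n.choose r - e) (mem_range.mpr (by omega)) (by omega)
        exact hbad (good_of_arrows r m n _ e f (by omega) hm le_rfl (by omega) (by omega)
          (by omega) he.2)
      have hcard := (card_le_card hsub).trans (card_union_le _ _)
      have h4 : ((range Q).image (fun i => n.choose r - i)).card ≤ Q := by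
        simpa using (card_image_le (s := range Q) (f := fun i => n.choose r - i))
      rw [card_range] at hcard
      have h5 : ((((range (n.choose r + 1)).filter
          (fun e => PairArrows r n e m f)).card : ℕ) : ℝ) ≤ 2 * Q := by
        exact_mod_cast (by omega : _ ≤ 2 * Q)
      have : sigmaR r m f / 2 = 2 * δ := by rw [hδ]; ring
      rw [this]
      linarith
  linarith

lemma good_bound (r m f : ℕ) (hr : 3 ≤ r) (hm : 1 ≤ m) (h : GoodF r m f) :
    (∃ a ≤ m, f = a.choose r) ∨ (f : ℝ) ≤ 12 * (m : ℝ) ^ ((r : ℝ) / ((r : ℝ) - 1)) := by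
  obtain ⟨⟨a, j, ha, hj, hf⟩, ⟨b, i, hb, hi, hf2⟩⟩ := h
  by_cases hab : b ≤ a
  · left
    refine ⟨a, ha, ?_⟩
    have := Nat.choose_le_choose r hab
    omega
  · push Not at hab
    by_cases hbr : b < r
    · left
      refine ⟨b, hb, ?_⟩
      have := Nat.choose_eq_zero_of_lt hbr
      omega
    · right
      push Not at hbr
      obtain ⟨s, rfl⟩ : ∃ s, r = s + 1 := ⟨r - 1, by omega⟩
      obtain ⟨c, rfl⟩ : ∃ c, b = c + 1 := ⟨b - 1, by omega⟩
      have hac : a.choose (s + 1) ≤ c.choose (s + 1) := Nat.choose_le_choose _ (by omega)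
      have hgap : (c + 1).choose (s + 1) = c.choose s + c.choose (s + 1) :=
        Nat.choose_succ_succ c s
      have hcs : c.choose s ≤ 4 * m := by omega
      have hpow := pow_le_pow_mul_choose c s (by omega)
      have hmul := Nat.add_one_mul_choose_eq c s
      have hfm : f * (s + 1) ≤ (c + 1) * (4 * m) := by
        calc f * (s + 1) ≤ (c + 1).choose (s + 1) * (s + 1) := Nat.mul_le_mul_right _ (by omega)
          _ = (c + 1) * c.choose s := hmul.symm
          _ ≤ _ := Nat.mul_le_mul_left _ hcs
      have hpow2 : c ^ s ≤ s ^ s * (4 * m) := hpow.trans (Nat.mul_le_mul_left _ hcs)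
      set y : ℝ := (m : ℝ) ^ (1 / (s : ℝ)) with hy
      have hs : 2 ≤ s := by omega
      have hs0 : (s : ℝ) ≠ 0 := by positivity
      have hm0 : (1 : ℝ) ≤ m := by exact_mod_cast hm
      have hy1 : 1 ≤ y := Real.one_le_rpow hm0 (by positivity)
      have hys : y ^ s = m := by
        rw [hy, ← Real.rpow_natCast, ← Real.rpow_mul (by positivity)]
        rw [one_div, inv_mul_cancel₀ hs0, Real.rpow_one]
      have h2s : (4 : ℝ) ≤ 2 ^ s := by
        calc (4 : ℝ) = 2 ^ 2 := by norm_num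
          _ ≤ 2 ^ s := pow_le_pow_right₀ (by norm_num) hs
      have hc : (c : ℝ) ≤ s * 2 * y := by
        have h7 : (c : ℝ) ^ s ≤ (s * 2 * y) ^ s := by
          calc (c : ℝ) ^ s ≤ (s : ℝ) ^ s * (4 * m) := by exact_mod_cast hpow2
            _ ≤ (s : ℝ) ^ s * (2 ^ s * m) := by gcongr
            _ = (s * 2 * y) ^ s := by rw [mul_pow, mul_pow, hys]; ring
        exact le_of_pow_le_pow_left₀ (by omega) (by positivity) h7
      have hexp : (m : ℝ) ^ (((s + 1 : ℕ) : ℝ) / (((s + 1 : ℕ) : ℝ) - 1)) = m * y := by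
        have : ((s + 1 : ℕ) : ℝ) / (((s + 1 : ℕ) : ℝ) - 1) = 1 + 1 / (s : ℝ) := by
          push_cast; rw [add_sub_cancel_right]; field_simp
        rw [this, Real.rpow_add (by positivity), Real.rpow_one]
      rw [hexp]
      have hfm' : (f : ℝ) * (s + 1) ≤ (c + 1) * (4 * m) := by exact_mod_cast hfm
      have h9 : (c + 1 : ℝ) ≤ (s + 1) * (3 * y) := by nlinarith
      have h8 : (f : ℝ) * (s + 1) ≤ (12 * (m * y)) * (s + 1) := by
        calc (f : ℝ) * (s + 1) ≤ (c + 1) * (4 * m) := hfm'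
          _ ≤ ((s + 1) * (3 * y)) * (4 * m) := by gcongr
          _ = _ := by ring
      exact le_of_mul_le_mul_right h8 (by positivity)

/-- All but `O(m^{r/(r-1)})` of the pairs `(m,f)` satisfy `σ_r(m,f) = 0`. -/
theorem few_pairs_of_positive_density :
    ∃ C : ℝ, 0 < C ∧ ∀ r m : ℕ, 3 ≤ r → 3 ≤ m →
      (((Finset.range (m.choose r + 1)).filter (fun f => 0 < sigmaR r m f)).card : ℝ) ≤
        C * (m : ℝ) ^ ((r : ℝ) / ((r : ℝ) - 1)) := by
  refine ⟨16, by norm_num, fun r m hr hm => ?_⟩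
  set X : ℝ := (m : ℝ) ^ ((r : ℝ) / ((r : ℝ) - 1)) with hX
  have hm1 : (1 : ℝ) ≤ m := by exact_mod_cast (by omega : 1 ≤ m)
  have hr3 : (3 : ℝ) ≤ r := by exact_mod_cast hr
  have hmX : (m : ℝ) ≤ X := by
    calc (m : ℝ) = (m : ℝ) ^ (1 : ℝ) := (Real.rpow_one _).symm
      _ ≤ X := Real.rpow_le_rpow_of_exponent_le hm1 (by
        rw [le_div_iff₀ (by linarith)]; linarith)
  have hX0 : 0 ≤ X := by linarith
  have hsub : ((Finset.range (m.choose r + 1)).filter (fun f => 0 < sigmaR r m f)) ⊆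
      (range (m + 1)).image (fun a => a.choose r) ∪ range (⌊12 * X⌋₊ + 1) := by
    intro f hf
    rw [mem_filter] at hf
    rw [mem_union, mem_image, mem_range]
    rcases good_bound r m f hr (by omega) (good_of_pos r m f (by omega) (by omega) hf.2) with
      ⟨a, ha, h⟩ | h
    · left; exact ⟨a, mem_range.mpr (by omega), h.symm⟩
    · right; exact Nat.lt_succ_of_le (Nat.le_floor h)
  have hcard := (card_le_card hsub).trans (card_union_le _ _)
  have h4 : ((range (m + 1)).image (fun a => a.choose r)).card ≤ m + 1 := by
    simpa using (card_image_le (s := range (m + 1)) (f := fun a => a.choose r))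
  rw [card_range] at hcard
  have h5 : ((((Finset.range (m.choose r + 1)).filter
      (fun f => 0 < sigmaR r m f)).card : ℕ) : ℝ) ≤ (m + 1) + (⌊12 * X⌋₊ + 1) := by
    exact_mod_cast (by omega)
  have h6 : (⌊12 * X⌋₊ : ℝ) ≤ 12 * X := Nat.floor_le (by positivity)
  linarith
end
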